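/- arXiv:2502.19720 — 2 statements merged into one kernel-verified Lean document; each statement's English description precedes it below -/
import Mathlib

section
/- Let P be a consensus matrix with invariant measure π and let C_{P*P} := n PᵀΠP. Then the LQ cost satisfies J(P) ≤ (π_max³ n² / π_min) · R̄(C_{P*P}) and the weighted LQ cost satisfies J_w(P) ≤ π_max³ n³ · R̄(C_{P*P}). -/
open Matrix

/-- A consensus matrix: entrywise nonnegative, row-stochastic, irreducible
(for every pair of indices some power has a positive entry), with positive diagonal. -/
def IsConsensus {n : ℕ} (P : Matrix (Fin n) (Fin n) ℝ) : Prop :=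
  (∀ i j, 0 ≤ P i j) ∧ (∀ i, (∑ j, P i j) = 1) ∧
  (∀ i j, ∃ k : ℕ, 0 < (P ^ k) i j) ∧ (∀ i, 0 < P i i)

/-- `mu` is the invariant measure of `P`: strictly positive, sums to `1`,
and is a left fixed vector of `P`. -/
def IsInvMeasure {n : ℕ} (P : Matrix (Fin n) (Fin n) ℝ) (mu : Fin n → ℝ) : Prop :=
  (∀ i, 0 < mu i) ∧ (∑ i, mu i) = 1 ∧ (∀ j, (∑ i, mu i * P i j) = mu j)

/-- The time reversal `P* = Π⁻¹ Pᵀ Π` with `Π = diag(mu)`. -/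
noncomputable def Pstar {n : ℕ} (P : Matrix (Fin n) (Fin n) ℝ) (mu : Fin n → ℝ) :
    Matrix (Fin n) (Fin n) ℝ :=
  Matrix.diagonal (fun i => (mu i)⁻¹) * Pᵀ * Matrix.diagonal mu

/-- The graph Laplacian `L(C) = diag(C 𝟙) − C`. -/
def lap {n : ℕ} (C : Matrix (Fin n) (Fin n) ℝ) : Matrix (Fin n) (Fin n) ℝ :=
  Matrix.diagonal (fun i => ∑ j, C i j) - C

/-- A conductance matrix: symmetric, entrywise nonnegative, irreducible. -/
def IsConductance {n : ℕ} (C : Matrix (Fin n) (Fin n) ℝ) : Prop :=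
  Cᵀ = C ∧ (∀ i j, 0 ≤ C i j) ∧ (∀ i j, ∃ k : ℕ, 0 < (C ^ k) i j)

/-- The effective resistance between `a` and `b`: `v a - v b` for a solution `v`
of `L(C) v = e_a - e_b` (junk value `0` if no solution exists). -/
noncomputable def effRes {n : ℕ} (C : Matrix (Fin n) (Fin n) ℝ) (a b : Fin n) : ℝ :=
  open Classical in
  if h : ∃ v : Fin n → ℝ, lap C *ᵥ v = Pi.single a 1 - Pi.single b 1 then
    h.choose a - h.choose b
  else 0

/-- The average effective resistance `(1/(2 n²)) Σ_{u,v} R_{uv}(C)`. -/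
noncomputable def avgRes {n : ℕ} (C : Matrix (Fin n) (Fin n) ℝ) : ℝ :=
  (1 / (2 * (n : ℝ) ^ 2)) * ∑ u, ∑ v, effRes C u v

/-- The unit-conductance matrix of the undirected graph associated with `P`:
edge `{u,v}` iff `P u v ≠ 0` or `P v u ≠ 0`. -/
noncomputable def adjMat {n : ℕ} (P : Matrix (Fin n) (Fin n) ℝ) : Matrix (Fin n) (Fin n) ℝ :=
  Matrix.of fun i j => if i ≠ j ∧ (P i j ≠ 0 ∨ P j i ≠ 0) then (1 : ℝ) else 0

/-- The LQ cost `J(P) = (1/n) Σ_{t≥0} ‖P^t − 𝟙 muᵀ‖_F²`. -/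
noncomputable def LQcost {n : ℕ} (P : Matrix (Fin n) (Fin n) ℝ) (mu : Fin n → ℝ) : ℝ :=
  (1 / (n : ℝ)) *
    ∑' t : ℕ, ∑ i, ∑ j,
      ((P ^ t - Matrix.vecMulVec (fun _ => 1) mu : Matrix (Fin n) (Fin n) ℝ) i j) ^ 2

/-- The weighted LQ cost `J_w(P)`. -/
noncomputable def LQcostW {n : ℕ} (P : Matrix (Fin n) (Fin n) ℝ) (mu : Fin n → ℝ) : ℝ :=
  ∑' t : ℕ, Matrix.trace ((1 - Matrix.vecMulVec mu (fun _ => 1)) * Pᵀ ^ t *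
    Matrix.diagonal mu * P ^ t * (1 - Matrix.vecMulVec (fun _ => 1) mu))

/-- The Green matrix `G(P) = Σ_{t≥0} (P^t − 𝟙 muᵀ)`. -/
noncomputable def Green {n : ℕ} (P : Matrix (Fin n) (Fin n) ℝ) (mu : Fin n → ℝ) :
    Matrix (Fin n) (Fin n) ℝ :=
  ∑' t : ℕ, (P ^ t - Matrix.vecMulVec (fun _ => 1) mu)

/-- Out-degree (excluding self-loops) of node `i` in the directed graph of `P`. -/
noncomputable def outDeg {n : ℕ} (P : Matrix (Fin n) (Fin n) ℝ) (i : Fin n) : ℕ :=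
  (Finset.univ.filter fun j => j ≠ i ∧ P i j ≠ 0).card

/-- In-degree (excluding self-loops) of node `j` in the directed graph of `P`. -/
noncomputable def inDeg {n : ℕ} (P : Matrix (Fin n) (Fin n) ℝ) (j : Fin n) : ℕ :=
  (Finset.univ.filter fun i => i ≠ j ∧ P i j ≠ 0).card

lemma fr_eq {n : ℕ} (M : Matrix (Fin n) (Fin n) ℝ) :
    trace (M * Mᵀ) = ∑ i, ∑ j, (M i j)^2 := by
  simp [trace, Matrix.mul_apply, sq]

lemma fr_nonneg {n : ℕ} (M : Matrix (Fin n) (Fin n) ℝ) : 0 ≤ trace (M * Mᵀ) := by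
  rw [fr_eq]; positivity

lemma fr_mul {n : ℕ} (M N : Matrix (Fin n) (Fin n) ℝ) :
    trace ((M * N) * (M * N)ᵀ) ≤ trace (M * Mᵀ) * trace (N * Nᵀ) := by
  rw [fr_eq, fr_eq, fr_eq, Finset.sum_mul_sum]
  refine Finset.sum_le_sum fun i _ => ?_
  have h2 : ∑ k, (∑ j, M i j ^ 2) * ∑ j, N k j ^ 2 = ∑ j, (∑ k, M i k ^ 2) * ∑ k, N k j ^ 2 := by
    rw [← Finset.mul_sum, ← Finset.mul_sum, Finset.sum_comm]
  rw [h2]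
  refine Finset.sum_le_sum fun j _ => ?_
  rw [Matrix.mul_apply]
  exact Finset.sum_mul_sq_le_sq_mul_sq _ _ _

lemma key_identity {n : ℕ} (A Y G F : Matrix (Fin n) (Fin n) ℝ)
    (hF : 1 - Aᵀ * A = Fᵀ * F)
    (hG1 : (1 - Aᵀ * A) * G = 1) (hG2 : G * (1 - Aᵀ * A) = 1)
    (hGs : Gᵀ = G) (hYs : Yᵀ = Y) (hY : Y = 1 + A * Y * Aᵀ) :
    trace Y ≤ trace G := by
  set W := 1 - Aᵀ * A with hW
  set H := Y - G with hH
  have hHs : Hᵀ = H := by simp [hH, hGs, hYs]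
  have p1 : 0 ≤ trace (Aᵀ * A * H * W * H) := by
    have := fr_nonneg (A * H * Fᵀ)
    rw [Matrix.transpose_mul, Matrix.transpose_mul, hHs, Matrix.transpose_transpose] at this
    rw [hF]
    rw [show Aᵀ * A * H * (Fᵀ * F) * H = Aᵀ * (A * H * Fᵀ * F * H) by
      simp only [Matrix.mul_assoc], Matrix.trace_mul_comm]
    simpa only [Matrix.mul_assoc] using this
  have p2 : 0 ≤ trace (W * H * W * H) := by
    have := fr_nonneg (F * H * Fᵀ)
    rw [Matrix.transpose_mul, Matrix.transpose_mul, hHs, Matrix.transpose_transpose] at this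
    rw [hF]
    rw [show Fᵀ * F * H * (Fᵀ * F) * H = Fᵀ * (F * H * Fᵀ * F * H) by
      simp only [Matrix.mul_assoc], Matrix.trace_mul_comm]
    simpa only [Matrix.mul_assoc] using this
  have hWH : W * H = W * Y - 1 := by rw [hH, mul_sub, hG1]
  have hHW : H * W = Y * W - 1 := by rw [hH, sub_mul, hG2]
  have e2 : W * H * W * H = W * Y * W * Y - W * Y - W * Y + 1 := by
    rw [Matrix.mul_assoc (W*H), hWH]; noncomm_ring
  have e1 : H * W * H = Y * W * Y - Y - Y + G := by
    rw [hHW, hH, sub_mul, mul_sub, Matrix.mul_assoc Y W G, hG1]; noncomm_ring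
  have e3 : Aᵀ * A * H * W * H = H * W * H - W * H * W * H := by
    rw [hW]; noncomm_ring
  set B := Aᵀ * A with hB
  have t1 : trace (B * Y) = trace Y - n := by
    have : trace Y = trace (1 + A * Y * Aᵀ) := by rw [← hY]
    rw [Matrix.trace_add, Matrix.trace_mul_comm (A * Y), ← Matrix.mul_assoc] at this
    simp at this
    rw [← hB] at this; linarith
  have t2 : trace (B * Y * B * Y) = trace (Y * Y) - 2 * trace Y + n := by
    have h : A * Y * Aᵀ = Y - 1 := by rw [eq_sub_iff_add_eq, add_comm]; exact hY.symm
    have : trace ((A * Y * Aᵀ) * (A * Y * Aᵀ)) = trace ((Y - 1) * (Y - 1)) := by rw [h]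
    rw [show (Y - 1) * (Y - 1) = Y * Y - Y - Y + 1 by noncomm_ring] at this
    rw [show (A * Y * Aᵀ) * (A * Y * Aᵀ) = A * (Y * Aᵀ * A * Y * Aᵀ) by
      simp only [Matrix.mul_assoc], Matrix.trace_mul_comm] at this
    rw [show Y * Aᵀ * A * Y * Aᵀ * A = Y * (B * Y * B) by
      simp only [hB, Matrix.mul_assoc], Matrix.trace_mul_comm] at this
    rw [this]
    simp
    ring
  have u1 : trace (W * Y) = n := by
    rw [hW, sub_mul, Matrix.trace_sub, t1]; simp
  have u2 : trace (Y * W * Y) = trace (Y * Y) - trace (B * Y * Y) := by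
    rw [Matrix.mul_assoc, Matrix.trace_mul_comm, hW, sub_mul, sub_mul, Matrix.trace_sub]; simp
  have u3 : trace (W * Y * W * Y) = trace (Y * Y) - 2 * trace (B * Y * Y) + trace (B * Y * B * Y) := by
    rw [show W * Y * W * Y = Y * Y - B * Y * Y - Y * (B * Y) + B * Y * B * Y by
      rw [hW]; noncomm_ring]
    rw [Matrix.trace_add, Matrix.trace_sub, Matrix.trace_sub, Matrix.trace_mul_comm Y (B * Y)]
    ring
  rw [e3, e1, e2] at p1
  rw [e2] at p2
  simp [Matrix.trace_add, Matrix.trace_sub] at p1 p2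
  linarith

open scoped MatrixOrder in
lemma psd_factor {n : ℕ} (M : Matrix (Fin n) (Fin n) ℝ) (hM : M.PosSemidef) :
    ∃ F : Matrix (Fin n) (Fin n) ℝ, M = Fᵀ * F := by
  obtain ⟨F, hF⟩ := CStarAlgebra.nonneg_iff_eq_star_mul_self.mp hM.nonneg
  refine ⟨F, ?_⟩
  rw [hF, Matrix.star_eq_conjTranspose, Matrix.conjTranspose_eq_transpose_of_trivial]

lemma key_ineq {n : ℕ} (A : Matrix (Fin n) (Fin n) ℝ) (hW : (1 - Aᵀ * A).PosDef) :
    Summable (fun t : ℕ => trace (A ^ t * (A ^ t)ᵀ)) ∧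
    ∑' t : ℕ, trace (A ^ t * (A ^ t)ᵀ) ≤ trace (1 - Aᵀ * A)⁻¹ := by
  obtain ⟨F, hF⟩ := psd_factor _ hW.posSemidef
  have hu := hW.isUnit
  have hdet := (Matrix.isUnit_iff_isUnit_det _).1 hu
  have hG1 := Matrix.mul_nonsing_inv _ hdet
  have hG2 := Matrix.nonsing_inv_mul _ hdet
  set G := (1 - Aᵀ * A)⁻¹ with hG
  have hGs : Gᵀ = G := by
    rw [hG, Matrix.transpose_nonsing_inv]; simp
  have hFl : (G * Fᵀ) * F = 1 := by rw [Matrix.mul_assoc, ← hF, hG2]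
  set c := trace ((G * Fᵀ) * (G * Fᵀ)ᵀ) with hc
  have hc0 : 0 ≤ c := fr_nonneg _
  have tel : ∀ t, trace ((F * A ^ t) * (F * A ^ t)ᵀ)
      = trace (A ^ t * (A ^ t)ᵀ) - trace (A ^ (t+1) * (A ^ (t+1))ᵀ) := by
    intro t
    have a1 : trace ((F * A ^ t) * (F * A ^ t)ᵀ) = trace ((A^t)ᵀ * (Fᵀ * F) * A^t) := by
      rw [Matrix.trace_mul_comm, Matrix.transpose_mul]; simp only [Matrix.mul_assoc]
    rw [a1, ← hF, mul_sub, sub_mul, Matrix.trace_sub, mul_one, Matrix.trace_mul_comm (A^t)ᵀ,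
      Matrix.trace_mul_comm (A^(t+1)), pow_succ' A t, Matrix.transpose_mul]
    simp only [Matrix.mul_assoc]
  have bd : ∀ t, trace (A ^ t * (A ^ t)ᵀ) ≤
      c * (trace (A ^ t * (A ^ t)ᵀ) - trace (A ^ (t+1) * (A ^ (t+1))ᵀ)) := by
    intro t
    rw [← tel, hc]
    refine le_trans (le_of_eq ?_) (fr_mul _ _)
    rw [← Matrix.mul_assoc, hFl, one_mul]
  have hsum : Summable (fun t : ℕ => trace (A ^ t * (A ^ t)ᵀ)) := by
    refine summable_of_sum_range_le (c := c * trace (1 : Matrix (Fin n) (Fin n) ℝ))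
      (fun t => fr_nonneg _) fun m => ?_
    calc _ ≤ ∑ t ∈ Finset.range m,
        c * (trace (A ^ t * (A ^ t)ᵀ) - trace (A ^ (t+1) * (A ^ (t+1))ᵀ)) :=
          Finset.sum_le_sum fun t _ => bd t
      _ = c * (trace (A ^ 0 * (A ^ 0)ᵀ) - trace (A ^ m * (A ^ m)ᵀ)) := by
          rw [← Finset.mul_sum, Finset.sum_range_sub']
      _ ≤ _ := by
          refine mul_le_mul_of_nonneg_left ?_ hc0
          have := fr_nonneg (A^m)
          simp at this ⊢; exact this
  refine ⟨hsum, ?_⟩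
  have hsY : Summable (fun t : ℕ => A ^ t * (A ^ t)ᵀ) := by
    refine Pi.summable.2 fun i => Pi.summable.2 fun j => ?_
    refine Summable.of_norm_bounded hsum fun t => ?_
    rw [fr_eq, Matrix.mul_apply, Real.norm_eq_abs]
    have hrow : ∀ i, ∑ k, (A^t) i k ^ 2 ≤ ∑ i, ∑ j, (A^t) i j ^ 2 := fun i =>
      Finset.single_le_sum (f := fun i => ∑ k, (A^t) i k ^ 2)
        (fun i _ => Finset.sum_nonneg fun k _ => sq_nonneg _) (Finset.mem_univ i)
    have hcs := Finset.sum_mul_sq_le_sq_mul_sq Finset.univ (fun k => (A^t) i k)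
      (fun k => (A^t) j k)
    simp only [Matrix.transpose_apply]
    refine abs_le_of_sq_le_sq (le_trans hcs ?_) (by positivity)
    rw [sq]
    exact mul_le_mul (hrow i) (hrow j) (by positivity) (by positivity)
  set Y := ∑' t : ℕ, A ^ t * (A ^ t)ᵀ with hYd
  have hYhs : HasSum (fun t : ℕ => A ^ t * (A ^ t)ᵀ) Y := hsY.hasSum
  have htr : HasSum (fun t : ℕ => trace (A ^ t * (A ^ t)ᵀ)) (trace Y) :=
    hYhs.map (Matrix.traceAddMonoidHom (Fin n) ℝ) (by
      show Continuous fun M : Matrix (Fin n) (Fin n) ℝ => trace M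
      fun_prop)
  rw [htr.tsum_eq]
  have hYs : Yᵀ = Y := by
    have h1 := hYhs.matrix_transpose
    simp only [Matrix.transpose_mul, Matrix.transpose_transpose] at h1
    exact h1.unique hYhs
  have hY : Y = 1 + A * Y * Aᵀ := by
    have h1 : HasSum (fun t : ℕ => A * (A ^ t * (A ^ t)ᵀ) * Aᵀ) (A * Y * Aᵀ) :=
      (hYhs.mul_left A).mul_right Aᵀ
    have h2 : (fun t : ℕ => A * (A ^ t * (A ^ t)ᵀ) * Aᵀ) = fun t : ℕ => A ^ (t+1) * (A ^ (t+1))ᵀ := by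
      funext t
      rw [pow_succ', Matrix.transpose_mul]; simp only [Matrix.mul_assoc]
    rw [h2] at h1
    have h3 := HasSum.zero_add (f := fun t : ℕ => A ^ t * (A ^ t)ᵀ) h1
    simp only [pow_zero, Matrix.transpose_one, mul_one] at h3
    exact hYhs.unique h3
  exact key_identity A Y G F hF hG1 hG2 hGs hYs hY

/-- The matrix `Π - PᵀΠP + ππᵀ`. -/
noncomputable def NN {n : ℕ} (P : Matrix (Fin n) (Fin n) ℝ) (mu : Fin n → ℝ) :
    Matrix (Fin n) (Fin n) ℝ :=
  diagonal mu - Pᵀ * diagonal mu * P + vecMulVec mu mu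

/-- Dirichlet form. -/
noncomputable def EE {n : ℕ} (P : Matrix (Fin n) (Fin n) ℝ) (mu x : Fin n → ℝ) : ℝ :=
  ∑ i, mu i * ∑ j, P i j * (x j - (P *ᵥ x) i) ^ 2

lemma EE_nonneg {n : ℕ} {P : Matrix (Fin n) (Fin n) ℝ} {mu : Fin n → ℝ}
    (hP : IsConsensus P) (hmu : IsInvMeasure P mu) (x : Fin n → ℝ) : 0 ≤ EE P mu x :=
  Finset.sum_nonneg fun i _ => mul_nonneg (hmu.1 i).le
    (Finset.sum_nonneg fun j _ => mul_nonneg (hP.1 i j) (sq_nonneg _))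

lemma EE_eq {n : ℕ} {P : Matrix (Fin n) (Fin n) ℝ} {mu : Fin n → ℝ}
    (hP : IsConsensus P) (hmu : IsInvMeasure P mu) (x : Fin n → ℝ) :
    x ⬝ᵥ ((diagonal mu - Pᵀ * diagonal mu * P) *ᵥ x) = EE P mu x := by
  have h1 : ∀ i, ∑ j, P i j * (x j - (P *ᵥ x) i) ^ 2
      = ∑ j, P i j * x j ^ 2 - (P *ᵥ x) i ^ 2 := by
    intro i
    have e : ∀ j, P i j * (x j - (P *ᵥ x) i) ^ 2
      = P i j * x j ^ 2 - 2 * (P *ᵥ x) i * (P i j * x j) + P i j * (P *ᵥ x) i ^ 2 := by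
      intro j; ring
    simp_rw [e]
    rw [Finset.sum_add_distrib, Finset.sum_sub_distrib, ← Finset.mul_sum, ← Finset.sum_mul,
      hP.2.1 i]
    have : ∑ j, P i j * x j = (P *ᵥ x) i := rfl
    rw [this]; ring
  have h2 : ∑ i, mu i * ∑ j, P i j * x j ^ 2 = ∑ j, mu j * x j ^ 2 := by
    simp_rw [Finset.mul_sum]
    rw [Finset.sum_comm]
    refine Finset.sum_congr rfl fun j _ => ?_
    rw [← hmu.2.2 j, Finset.sum_mul]
    refine Finset.sum_congr rfl fun i _ => ?_
    ring
  unfold EE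
  simp_rw [h1, mul_sub]
  rw [Finset.sum_sub_distrib, h2, Matrix.sub_mulVec, dotProduct_sub]
  congr 1
  · simp only [dotProduct, mulVec_diagonal]
    refine Finset.sum_congr rfl fun i _ => ?_
    ring
  · rw [← Matrix.mulVec_mulVec, ← Matrix.mulVec_mulVec, Matrix.dotProduct_mulVec,
      Matrix.vecMul_transpose]
    simp only [dotProduct, mulVec_diagonal]
    refine Finset.sum_congr rfl fun i _ => ?_
    ring

lemma EE_const {n : ℕ} {P : Matrix (Fin n) (Fin n) ℝ} {mu : Fin n → ℝ}
    (hP : IsConsensus P) (hmu : IsInvMeasure P mu) (x : Fin n → ℝ) (h : EE P mu x = 0) :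
    ∀ i j, x i = x j := by
  obtain ⟨hP0, hP1, hPi, hPd⟩ := hP
  have h1 : ∀ i j, 0 < P i j → x j = (P *ᵥ x) i := by
    intro i j hij
    have nn : ∀ i j, 0 ≤ P i j * (x j - (P *ᵥ x) i) ^ 2 := fun i j =>
      mul_nonneg (hP0 i j) (sq_nonneg _)
    have a1 := (Finset.sum_eq_zero_iff_of_nonneg (fun i _ => mul_nonneg (hmu.1 i).le
      (Finset.sum_nonneg fun j _ => nn i j))).1 h i (Finset.mem_univ _)
    have a2 := (mul_eq_zero.1 a1).resolve_left (hmu.1 i).ne'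
    have a3 := (Finset.sum_eq_zero_iff_of_nonneg (fun j _ => nn i j)).1 a2 j (Finset.mem_univ _)
    have a4 := (mul_eq_zero.1 a3).resolve_left hij.ne'
    have a5 := pow_eq_zero_iff (two_ne_zero) |>.1 a4
    linarith
  have h2 : ∀ i j, 0 < P i j → x i = x j := fun i j hij => by
    rw [h1 i j hij, h1 i i (hPd i)]
  have hpow : ∀ k i j, 0 ≤ (P ^ k) i j := by
    intro k
    induction k with
    | zero => intro i j; rw [pow_zero, Matrix.one_apply]; split_ifs <;> norm_num
    | succ k ih =>
      intro i j
      rw [pow_succ, Matrix.mul_apply]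
      exact Finset.sum_nonneg fun l _ => mul_nonneg (ih i l) (hP0 l j)
  have h3 : ∀ k i j, 0 < (P ^ k) i j → x i = x j := by
    intro k
    induction k with
    | zero =>
      intro i j hij
      rw [pow_zero, Matrix.one_apply] at hij
      split_ifs at hij with hh
      · rw [hh]
      · exact absurd hij (lt_irrefl _)
    | succ k ih =>
      intro i j hij
      rw [pow_succ, Matrix.mul_apply] at hij
      obtain ⟨l, -, hl⟩ := Finset.exists_lt_of_sum_lt (s := Finset.univ)
        (f := fun _ : Fin n => (0:ℝ)) (g := fun l => (P ^ k) i l * P l j) (by simpa using hij)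
      have hl1 : 0 < (P ^ k) i l := lt_of_le_of_ne (hpow k i l) (fun h0 => by
        rw [← h0] at hl; simp at hl)
      have hl2 : 0 < P l j := lt_of_le_of_ne (hP0 l j) (fun h0 => by
        rw [← h0] at hl; simp at hl)
      rw [ih i l hl1, h2 l j hl2]
  intro i j
  obtain ⟨k, hk⟩ := hPi i j
  exact h3 k i j hk

lemma NN_transpose {n : ℕ} (P : Matrix (Fin n) (Fin n) ℝ) (mu : Fin n → ℝ) :
    (NN P mu)ᵀ = NN P mu := by
  simp [NN, Matrix.transpose_mul, Matrix.mul_assoc, Matrix.transpose_vecMulVec]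

lemma NN_posDef {n : ℕ} {P : Matrix (Fin n) (Fin n) ℝ} {mu : Fin n → ℝ}
    (hP : IsConsensus P) (hmu : IsInvMeasure P mu) : (NN P mu).PosDef := by
  rw [Matrix.posDef_iff_dotProduct_mulVec]
  refine ⟨?_, fun {x} hx => ?_⟩
  · rw [Matrix.IsHermitian, Matrix.conjTranspose_eq_transpose_of_trivial, NN_transpose]
  · have e : x ⬝ᵥ (NN P mu *ᵥ x) = EE P mu x + (mu ⬝ᵥ x) ^ 2 := by
      rw [NN, Matrix.add_mulVec, dotProduct_add, EE_eq hP hmu, Matrix.vecMulVec_mulVec]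
      simp [dotProduct_smul, dotProduct_comm x mu, sq]
    rw [star_trivial, e]
    have h0 := EE_nonneg hP hmu x
    rcases h0.lt_or_eq with h1 | h1
    · positivity
    · have hc := EE_const hP hmu x h1.symm
      rw [← h1, zero_add]
      have : mu ⬝ᵥ x ≠ 0 := by
        intro hz
        apply hx
        funext i
        have : mu ⬝ᵥ x = x i := by
          unfold dotProduct
          rw [Finset.sum_congr rfl (fun j _ => by rw [hc j i]), ← Finset.sum_mul, hmu.2.1, one_mul]
        rw [← this, hz]; rfl
      positivity

lemma P_one {n : ℕ} {P : Matrix (Fin n) (Fin n) ℝ} (hP : IsConsensus P) :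
    P *ᵥ (fun _ => 1) = fun _ => 1 := by
  funext i; simp [mulVec, dotProduct, hP.2.1 i]

lemma mu_P {n : ℕ} {P : Matrix (Fin n) (Fin n) ℝ} {mu : Fin n → ℝ} (hmu : IsInvMeasure P mu) :
    mu ᵥ* P = mu := by
  funext j; simp [vecMul, dotProduct, hmu.2.2 j]

lemma mu_one {n : ℕ} {P : Matrix (Fin n) (Fin n) ℝ} {mu : Fin n → ℝ} (hmu : IsInvMeasure P mu) :
    mu ⬝ᵥ (fun _ => 1) = 1 := by
  simp [dotProduct, hmu.2.1]

lemma PDP_one {n : ℕ} {P : Matrix (Fin n) (Fin n) ℝ} {mu : Fin n → ℝ}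
    (hP : IsConsensus P) (hmu : IsInvMeasure P mu) :
    (Pᵀ * diagonal mu * P) *ᵥ (fun _ => 1) = mu := by
  rw [← Matrix.mulVec_mulVec, P_one hP, ← Matrix.mulVec_mulVec]
  have : diagonal mu *ᵥ (fun _ => 1) = mu := by funext i; simp [mulVec_diagonal]
  rw [this, Matrix.mulVec_transpose, mu_P hmu]

lemma lap_eq {n : ℕ} {P : Matrix (Fin n) (Fin n) ℝ} {mu : Fin n → ℝ}
    (hP : IsConsensus P) (hmu : IsInvMeasure P mu) :
    lap ((n : ℝ) • (Pᵀ * diagonal mu * P)) = (n : ℝ) • (diagonal mu - Pᵀ * diagonal mu * P) := by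
  have h : ∀ i, ∑ j, (Pᵀ * diagonal mu * P) i j = mu i := by
    intro i
    have := congrFun (PDP_one hP hmu) i
    simpa only [mulVec, dotProduct, mul_one] using this
  rw [lap, smul_sub]
  congr 1
  ext i j
  by_cases hij : i = j
  · subst hij
    simp only [Matrix.diagonal_apply_eq, Matrix.smul_apply, ← Finset.smul_sum, h]
  · simp [Matrix.diagonal_apply_ne _ hij]

lemma NN_one {n : ℕ} {P : Matrix (Fin n) (Fin n) ℝ} {mu : Fin n → ℝ}
    (hP : IsConsensus P) (hmu : IsInvMeasure P mu) :
    NN P mu *ᵥ (fun _ => 1) = mu := by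
  rw [NN, Matrix.add_mulVec, Matrix.sub_mulVec, PDP_one hP hmu, Matrix.vecMulVec_mulVec, mu_one hmu]
  funext i; simp [mulVec_diagonal]

lemma effRes_eq {n : ℕ} {P : Matrix (Fin n) (Fin n) ℝ} {mu : Fin n → ℝ}
    (hP : IsConsensus P) (hmu : IsInvMeasure P mu) (a b : Fin n) :
    effRes ((n : ℝ) • (Pᵀ * diagonal mu * P)) a b =
      (1 / (n:ℝ)) * ((NN P mu)⁻¹ a a - (NN P mu)⁻¹ a b - (NN P mu)⁻¹ b a + (NN P mu)⁻¹ b b) := by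
  have hn : (n : ℝ) ≠ 0 := by
    have := a.pos
    positivity
  have hdet := (Matrix.isUnit_iff_isUnit_det _).1 (NN_posDef hP hmu).isUnit
  have hG1 := Matrix.mul_nonsing_inv _ hdet
  set G := (NN P mu)⁻¹ with hG
  set e : Fin n → ℝ := Pi.single a 1 - Pi.single b 1 with he
  set v : Fin n → ℝ := (1 / (n:ℝ)) • (G *ᵥ e) with hv
  have hNv : (n:ℝ) • (NN P mu *ᵥ v) = e := by
    rw [hv, Matrix.mulVec_smul, Matrix.mulVec_mulVec, hG1, Matrix.one_mulVec, smul_smul,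
      mul_one_div_cancel hn, one_smul]
  have hmv : mu ⬝ᵥ v = 0 := by
    have h1 : mu = (fun _ => (1:ℝ)) ᵥ* NN P mu := by
      rw [← Matrix.mulVec_transpose, NN_transpose, NN_one hP hmu]
    have h2 : (n:ℝ) * (mu ⬝ᵥ v) = 0 := by
      rw [h1, ← Matrix.dotProduct_mulVec, ← smul_eq_mul, ← dotProduct_smul, hNv, he]
      simp [dotProduct_sub]
    exact (mul_eq_zero.1 h2).resolve_left hn
  have hL : lap ((n : ℝ) • (Pᵀ * diagonal mu * P)) *ᵥ v = e := by
    rw [lap_eq hP hmu, ← hNv, Matrix.smul_mulVec, NN, Matrix.add_mulVec, Matrix.vecMulVec_mulVec,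
      hmv]
    simp
  have hex : ∃ v : Fin n → ℝ, lap ((n : ℝ) • (Pᵀ * diagonal mu * P)) *ᵥ v
    = Pi.single a 1 - Pi.single b 1 := ⟨v, hL⟩
  rw [effRes, dif_pos hex]
  have hch := hex.choose_spec
  set w := hex.choose with hw
  have hz : EE P mu (w - v) = 0 := by
    rw [← EE_eq hP hmu]
    have h3 : lap ((n : ℝ) • (Pᵀ * diagonal mu * P)) *ᵥ (w - v) = 0 := by
      rw [Matrix.mulVec_sub, hL, hch, he, sub_self]
    rw [lap_eq hP hmu, Matrix.smul_mulVec] at h3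
    rw [(smul_eq_zero.1 h3).resolve_left hn, dotProduct_zero]
  have hcc := EE_const hP hmu _ hz a b
  simp only [Pi.sub_apply] at hcc
  have : w a - w b = v a - v b := by linarith
  rw [this, hv, he]
  simp only [Pi.smul_apply, smul_eq_mul, Matrix.mulVec_sub, Pi.sub_apply,
    Matrix.mulVec_single_one, Matrix.col_apply]
  ring

lemma trace_bound {n : ℕ} {P : Matrix (Fin n) (Fin n) ℝ} {mu : Fin n → ℝ}
    (hP : IsConsensus P) (hmu : IsInvMeasure P mu) (hn : (n:ℝ) ≠ 0) (M : ℝ) (hM : ∀ i, mu i ≤ M) :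
    trace ((NN P mu)⁻¹ * diagonal mu) - 1 ≤ M ^ 2 * (n:ℝ) ^ 3 *
      avgRes ((n : ℝ) • (Pᵀ * diagonal mu * P)) := by
  have hpd := (NN_posDef hP hmu).inv
  have hdet := (Matrix.isUnit_iff_isUnit_det _).1 (NN_posDef hP hmu).isUnit
  have hG2 := Matrix.nonsing_inv_mul _ hdet
  have hR := fun a b => effRes_eq hP hmu a b
  have hGmu : (NN P mu)⁻¹ *ᵥ mu = fun _ => 1 := by
    nth_rw 2 [← NN_one hP hmu]
    rw [Matrix.mulVec_mulVec, hG2, Matrix.one_mulVec]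
  set G := (NN P mu)⁻¹ with hG
  have hrow : ∀ a, ∑ b, G a b * mu b = 1 := fun a => congrFun hGmu a
  have hGs : Gᵀ = G := by rw [hG, Matrix.transpose_nonsing_inv, NN_transpose]
  have hsymm : ∀ a b, G a b = G b a := fun a b => congrFun (congrFun hGs b) a
  set R := fun a b => effRes ((n : ℝ) • (Pᵀ * diagonal mu * P)) a b with hRd
  have hRn : ∀ a b, 0 ≤ R a b := by
    intro a b
    rw [hRd]; simp only; rw [hR]
    refine mul_nonneg (by positivity) ?_
    have := hpd.posSemidef.dotProduct_mulVec_nonneg (Pi.single a 1 - Pi.single b 1)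
    simp only [star_trivial, Matrix.mulVec_sub, Matrix.mulVec_single_one, sub_dotProduct,
      dotProduct_sub, single_one_dotProduct, Matrix.col_apply] at this
    linarith
  have hs : ∑ a, ∑ b, mu a * mu b * R a b = 2 / n * (trace (G * diagonal mu) - 1) := by
    have e : ∀ a b, mu a * mu b * R a b = (1 / (n:ℝ)) * ((mu a * G a a) * mu b
      - 2 * (mu a * (G a b * mu b)) + mu a * (mu b * G b b)) := by
      intro a b
      rw [hRd]; simp only; rw [hR, hsymm b a]; ring
    have ht : trace (G * diagonal mu) = ∑ i, mu i * G i i := by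
      simp only [trace, Matrix.diag_apply, Matrix.mul_diagonal]
      exact Finset.sum_congr rfl fun i _ => mul_comm _ _
    have e2 : ∀ a, ∑ b, mu a * mu b * R a b = (1 / (n:ℝ)) * (mu a * G a a
      - 2 * mu a + mu a * ∑ b, mu b * G b b) := by
      intro a
      rw [Finset.sum_congr rfl fun b _ => e a b, ← Finset.mul_sum, Finset.sum_add_distrib,
        Finset.sum_sub_distrib, ← Finset.mul_sum, ← Finset.mul_sum, ← Finset.mul_sum,
        ← Finset.mul_sum, hrow a, hmu.2.1, mul_one, mul_one]
    rw [Finset.sum_congr rfl fun a _ => e2 a, ← Finset.mul_sum, Finset.sum_add_distrib,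
        Finset.sum_sub_distrib, ← Finset.mul_sum, ← Finset.sum_mul, hmu.2.1, ht]
    ring
  have hle : ∑ a, ∑ b, mu a * mu b * R a b ≤ ∑ a, ∑ b, M ^ 2 * R a b := by
    refine Finset.sum_le_sum fun a _ => Finset.sum_le_sum fun b _ => ?_
    refine mul_le_mul_of_nonneg_right ?_ (hRn a b)
    rw [sq]
    exact mul_le_mul (hM a) (hM b) (hmu.1 b).le ((hmu.1 a).le.trans (hM a))
  rw [hs] at hle
  simp only [← Finset.mul_sum] at hle
  have hav : avgRes ((n : ℝ) • (Pᵀ * diagonal mu * P)) = (1 / (2 * (n : ℝ) ^ 2)) * ∑ a, ∑ b, R a b :=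
    rfl
  rw [hav]
  have hnp : (0:ℝ) < n := lt_of_le_of_ne (by positivity) hn.symm
  have := mul_le_mul_of_nonneg_left hle (show (0:ℝ) ≤ n / 2 by positivity)
  have e1 : (n:ℝ) / 2 * (2 / n * (trace (G * diagonal mu) - 1)) = trace (G * diagonal mu) - 1 := by
    field_simp
  rw [e1] at this
  refine this.trans (le_of_eq ?_)
  field_simp

lemma EUpow {n : ℕ} {P : Matrix (Fin n) (Fin n) ℝ} {mu : Fin n → ℝ}
    (hP : IsConsensus P) (hmu : IsInvMeasure P mu) (t : ℕ) :
    P ^ t * vecMulVec (fun _ => 1) mu = vecMulVec (fun _ => 1) mu ∧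
    (P - vecMulVec (fun _ => 1) mu) ^ (t+1) = P ^ (t+1) - vecMulVec (fun _ => 1) mu := by
  have h1 : P * vecMulVec (fun _ => 1) mu = vecMulVec (fun _ => 1) mu := by
    rw [Matrix.mul_vecMulVec, P_one hP]
  have h2 : vecMulVec (fun _ : Fin n => (1:ℝ)) mu * P = vecMulVec (fun _ => 1) mu := by
    rw [Matrix.vecMulVec_mul, mu_P hmu]
  have h3 : vecMulVec (fun _ : Fin n => (1:ℝ)) mu * vecMulVec (fun _ => 1) mu
      = vecMulVec (fun _ : Fin n => (1:ℝ)) mu := by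
    rw [Matrix.vecMulVec_mul_vecMulVec, mu_one hmu, one_smul]
  have h4 : ∀ t, P ^ t * vecMulVec (fun _ => 1) mu = vecMulVec (fun _ => 1) mu := by
    intro t
    induction t with
    | zero => simp
    | succ t ih => rw [pow_succ, Matrix.mul_assoc, h1, ih]
  refine ⟨h4 t, ?_⟩
  induction t with
  | zero => simp
  | succ t ih =>
    rw [pow_succ, ih, sub_mul, mul_sub, mul_sub, h4, h2, h3, ← pow_succ]; simp

lemma wterm {n : ℕ} {P : Matrix (Fin n) (Fin n) ℝ} {mu : Fin n → ℝ}
    (hP : IsConsensus P) (hmu : IsInvMeasure P mu) (t : ℕ) :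
    Matrix.trace ((1 - Matrix.vecMulVec mu (fun _ => 1)) * Pᵀ ^ t *
    Matrix.diagonal mu * P ^ t * (1 - Matrix.vecMulVec (fun _ => 1) mu)) =
    ∑ i, ∑ j, mu i * ((P ^ t - Matrix.vecMulVec (fun _ => 1) mu : Matrix (Fin n) (Fin n) ℝ) i j) ^ 2 := by
  set D := P ^ t - Matrix.vecMulVec (fun _ => 1) mu with hD
  have h1 : P ^ t * (1 - Matrix.vecMulVec (fun _ => 1) mu) = D := by
    rw [mul_sub, mul_one, (EUpow hP hmu t).1]
  have h2 : (1 - Matrix.vecMulVec mu (fun _ => 1)) * Pᵀ ^ t = Dᵀ := by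
    rw [← h1, Matrix.transpose_mul, Matrix.transpose_pow, Matrix.transpose_sub,
      Matrix.transpose_one, Matrix.transpose_vecMulVec]
  rw [Matrix.mul_assoc _ (P ^ t), h1, h2, Matrix.mul_assoc, Matrix.trace_mul_comm]
  simp only [trace, Matrix.diag_apply, Matrix.mul_apply (M := diagonal mu * D),
    Matrix.diagonal_mul, Matrix.transpose_apply]
  refine Finset.sum_congr rfl fun i _ => Finset.sum_congr rfl fun j _ => ?_
  ring

lemma main_w {n : ℕ} {P : Matrix (Fin n) (Fin n) ℝ} {mu : Fin n → ℝ}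
    (hP : IsConsensus P) (hmu : IsInvMeasure P mu) (hn : (n:ℝ) ≠ 0) (M : ℝ) (hM : ∀ i, mu i ≤ M)
    (hM0 : 0 ≤ M) :
    Summable (fun t : ℕ =>
      ∑ i, ∑ j, mu i * ((P ^ t - Matrix.vecMulVec (fun _ => 1) mu : Matrix (Fin n) (Fin n) ℝ) i j) ^ 2) ∧
    ∑' t : ℕ, ∑ i, ∑ j, mu i * ((P ^ t - Matrix.vecMulVec (fun _ => 1) mu : Matrix (Fin n) (Fin n) ℝ) i j) ^ 2
      ≤ M ^ 3 * (n:ℝ) ^ 3 * avgRes ((n : ℝ) • (Pᵀ * diagonal mu * P)) := by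
  set s : Fin n → ℝ := fun i => Real.sqrt (mu i) with hs
  have hs0 : ∀ i, s i ≠ 0 := fun i => (Real.sqrt_pos.2 (hmu.1 i)).ne'
  have hss : ∀ i, s i * s i = mu i := fun i => Real.mul_self_sqrt (hmu.1 i).le
  set E := P - vecMulVec (fun _ => 1) mu with hE
  set S := diagonal s with hS
  set T := diagonal (fun i => (s i)⁻¹) with hT
  have hST : S * T = 1 := by
    rw [hS, hT, Matrix.diagonal_mul_diagonal, ← Matrix.diagonal_one]
    congr 1; funext i; exact mul_inv_cancel₀ (hs0 i)
  have hTS : T * S = 1 := by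
    rw [hS, hT, Matrix.diagonal_mul_diagonal, ← Matrix.diagonal_one]
    congr 1; funext i; exact inv_mul_cancel₀ (hs0 i)
  have hSS : S * S = diagonal mu := by
    rw [hS, Matrix.diagonal_mul_diagonal]; congr 1; funext i; exact hss i
  have hSt : Sᵀ = S := Matrix.diagonal_transpose _
  have hTt : Tᵀ = T := Matrix.diagonal_transpose _
  set A := S * E * T with hA
  have hApow : ∀ t, A ^ t = S * E ^ t * T := by
    intro t
    induction t with
    | zero => simp [hST]
    | succ t ih =>
      rw [pow_succ, ih, hA, pow_succ]
      calc S * E ^ t * T * (S * E * T) = S * E ^ t * (T * S) * E * T := by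
            simp only [Matrix.mul_assoc]
        _ = _ := by rw [hTS, mul_one]; simp only [Matrix.mul_assoc]
  have hEE : Eᵀ * diagonal mu * E = Pᵀ * diagonal mu * P - vecMulVec mu mu := by
    have q1 : diagonal mu *ᵥ (fun _ => 1) = mu := by funext i; simp [mulVec_diagonal]
    have q2 : (fun _ => 1) ᵥ* diagonal mu = mu := by funext i; simp [vecMul_diagonal]
    rw [hE, Matrix.transpose_sub, Matrix.transpose_vecMulVec, sub_mul, sub_mul, mul_sub, mul_sub,
      Matrix.mul_vecMulVec, Matrix.vecMulVec_mul, Matrix.vecMulVec_mul, Matrix.vecMulVec_mul_vecMulVec,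
      q2, mu_P hmu, mu_one hmu, ← Matrix.mulVec_mulVec, q1, Matrix.mulVec_transpose, mu_P hmu]
    simp
  have hW : 1 - Aᵀ * A = T * NN P mu * T := by
    have h1 : Aᵀ * A = T * (Eᵀ * diagonal mu * E) * T := by
      rw [hA, Matrix.transpose_mul, Matrix.transpose_mul, hSt, hTt, ← hSS]
      simp only [Matrix.mul_assoc]
    have h2 : (1 : Matrix (Fin n) (Fin n) ℝ) = T * diagonal mu * T := by
      rw [← hSS, ← Matrix.mul_assoc, hTS, one_mul, hST]
    rw [h1, hEE]
    nth_rw 1 [h2]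
    rw [← sub_mul, ← mul_sub, NN, sub_sub_eq_add_sub, add_sub_right_comm]
  have hTu : IsUnit T := ⟨⟨T, S, hTS, hST⟩, rfl⟩
  have hWpd : (1 - Aᵀ * A).PosDef := by
    rw [hW]
    have := (Matrix.IsUnit.posDef_star_left_conjugate_iff (x := NN P mu) hTu).2 (NN_posDef hP hmu)
    rwa [Matrix.star_eq_conjTranspose, Matrix.conjTranspose_eq_transpose_of_trivial, hTt] at this
  have hdet := (Matrix.isUnit_iff_isUnit_det _).1 (NN_posDef hP hmu).isUnit
  have hG1 := Matrix.mul_nonsing_inv _ hdet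
  have hWinv : (1 - Aᵀ * A)⁻¹ = S * (NN P mu)⁻¹ * S := by
    apply Matrix.inv_eq_right_inv
    rw [hW]
    calc T * NN P mu * T * (S * (NN P mu)⁻¹ * S)
        = T * NN P mu * (T * S) * (NN P mu)⁻¹ * S := by simp only [Matrix.mul_assoc]
      _ = T * (NN P mu * (NN P mu)⁻¹) * S := by rw [hTS, mul_one]; simp only [Matrix.mul_assoc]
      _ = 1 := by rw [hG1, mul_one, hTS]
  have htr : trace (1 - Aᵀ * A)⁻¹ = trace ((NN P mu)⁻¹ * diagonal mu) := by
    rw [hWinv, Matrix.mul_assoc, Matrix.trace_mul_comm, Matrix.mul_assoc, hSS]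
  obtain ⟨hsum, hle⟩ := key_ineq A hWpd
  rw [htr] at hle
  have hb := trace_bound hP hmu hn M hM
  set f : ℕ → ℝ := fun t => trace (A ^ t * (A ^ t)ᵀ) with hf
  set g : ℕ → ℝ := fun t =>
    ∑ i, ∑ j, mu i * ((P ^ t - Matrix.vecMulVec (fun _ => 1) mu : Matrix (Fin n) (Fin n) ℝ) i j) ^ 2 with hg
  have hf0 : f 0 = n := by simp [hf]
  have hg0 : g 0 ≤ M * (n - 1) := by
    have e1 : ∀ j, ∑ i, mu i * ((P ^ 0 - Matrix.vecMulVec (fun _ => 1) mu : Matrix (Fin n) (Fin n) ℝ) i j) ^ 2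
        = mu j - mu j ^ 2 := by
      intro j
      have e2 : ∀ i, mu i * ((P ^ 0 - Matrix.vecMulVec (fun _ => 1) mu : Matrix (Fin n) (Fin n) ℝ) i j) ^ 2
          = (if i = j then mu i * (1 - 2 * mu j) else 0) + mu i * mu j ^ 2 := by
        intro i
        rw [pow_zero, Matrix.sub_apply, Matrix.one_apply, Matrix.vecMulVec_apply]
        split_ifs <;> ring
      rw [Finset.sum_congr rfl fun i _ => e2 i, Finset.sum_add_distrib, ← Finset.sum_mul, hmu.2.1]
      simp
      ring
    have e3 : g 0 = ∑ j, (mu j - mu j ^ 2) := by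
      rw [hg]; simp only; rw [Finset.sum_comm]
      exact Finset.sum_congr rfl fun j _ => e1 j
    rw [e3]
    have e4 : M * ((n:ℝ) - 1) = ∑ j : Fin n, M * (1 - mu j) := by
      rw [← Finset.mul_sum, Finset.sum_sub_distrib, hmu.2.1]; simp
    rw [e4]
    refine Finset.sum_le_sum fun j _ => ?_
    have : mu j ≤ 1 := by
      rw [← hmu.2.1]
      exact Finset.single_le_sum (fun i _ => (hmu.1 i).le) (Finset.mem_univ j)
    nlinarith [hM j]
  have hg1 : ∀ t, g (t+1) ≤ M * f (t+1) := by
    intro t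
    simp only [hg, hf]
    rw [fr_eq, hApow, (EUpow hP hmu t).2, Finset.mul_sum]
    refine Finset.sum_le_sum fun i _ => ?_
    rw [Finset.mul_sum]
    refine Finset.sum_le_sum fun j _ => ?_
    rw [hT, hS, Matrix.mul_diagonal, Matrix.diagonal_mul]
    set x := (P ^ (t+1) - vecMulVec (fun _ => 1) mu : Matrix (Fin n) (Fin n) ℝ) i j
    have e : (s i * x * (s j)⁻¹) ^ 2 = mu i * x ^ 2 / mu j := by
      rw [← hss i, ← hss j]
      have := hs0 j
      field_simp
    rw [e, mul_div_assoc', le_div_iff₀ (hmu.1 j), mul_comm]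
    exact mul_le_mul_of_nonneg_right (hM j) (mul_nonneg (hmu.1 i).le (sq_nonneg x))
  have hgn : ∀ t, 0 ≤ g t := fun t => Finset.sum_nonneg fun i _ => Finset.sum_nonneg fun j _ =>
    mul_nonneg (hmu.1 i).le (sq_nonneg _)
  have hfs : Summable (fun t => f (t+1)) := (summable_nat_add_iff 1).2 hsum
  have hgs1 : Summable (fun t => g (t+1)) :=
    Summable.of_nonneg_of_le (fun t => hgn _) hg1 (hfs.mul_left M)
  have hgs : Summable g := (summable_nat_add_iff 1).1 hgs1
  refine ⟨hgs, ?_⟩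
  have b1 := hgs.tsum_eq_zero_add
  have b2 := hsum.tsum_eq_zero_add
  have b3 : ∑' t, g (t+1) ≤ M * ∑' t, f (t+1) := by
    rw [← tsum_mul_left]
    exact hgs1.tsum_le_tsum hg1 (hfs.mul_left M)
  have b4 : ∑' t, g t ≤ M * (∑' t, f t - 1) := by
    rw [b1, b2, hf0]
    linarith
  refine b4.trans ?_
  calc M * (∑' t, f t - 1) ≤ M * (M ^ 2 * (n:ℝ) ^ 3 *
      avgRes ((n : ℝ) • (Pᵀ * diagonal mu * P))) :=
        mul_le_mul_of_nonneg_left (by linarith) hM0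
    _ = _ := by ring

/-- Upper bounds on the LQ cost and weighted LQ cost via the average effective
resistance of `C_{P*P} = n PᵀΠP`. -/
theorem stmt9 {n : ℕ} (P : Matrix (Fin n) (Fin n) ℝ) (mu : Fin n → ℝ)
    (hP : IsConsensus P) (hmu : IsInvMeasure P mu)
    (mumin mumax : ℝ)
    (hmin : (∀ i, mumin ≤ mu i) ∧ ∃ i, mu i = mumin)
    (hmax : (∀ i, mu i ≤ mumax) ∧ ∃ i, mu i = mumax) :
    LQcost P mu ≤ mumax ^ 3 * (n : ℝ) ^ 2 / mumin *
        avgRes ((n : ℝ) • (Pᵀ * Matrix.diagonal mu * P)) ∧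
      LQcostW P mu ≤ mumax ^ 3 * (n : ℝ) ^ 3 *
        avgRes ((n : ℝ) • (Pᵀ * Matrix.diagonal mu * P)) := by
  obtain ⟨hm, i0, hi0⟩ := hmin
  obtain ⟨hM, -⟩ := hmax
  have hm0 : 0 < mumin := hi0 ▸ hmu.1 i0
  have hM0 : 0 ≤ mumax := (hmu.1 i0).le.trans (hM i0)
  have hnp : (0:ℝ) < n := by
    have := i0.pos
    positivity
  obtain ⟨hsum, hle⟩ := main_w hP hmu hnp.ne' mumax hM hM0
  constructor
  · rw [LQcost]
    have hterm : ∀ t : ℕ, ∑ i, ∑ j,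
        ((P ^ t - Matrix.vecMulVec (fun _ => 1) mu : Matrix (Fin n) (Fin n) ℝ) i j) ^ 2 ≤
        mumin⁻¹ * ∑ i, ∑ j, mu i * ((P ^ t - Matrix.vecMulVec (fun _ => 1) mu : Matrix (Fin n) (Fin n) ℝ) i j) ^ 2 := by
      intro t
      rw [← div_eq_inv_mul, le_div_iff₀ hm0, Finset.sum_mul]
      refine Finset.sum_le_sum fun i _ => ?_
      rw [Finset.sum_mul]
      refine Finset.sum_le_sum fun j _ => ?_
      rw [mul_comm]
      exact mul_le_mul_of_nonneg_right (hm i) (sq_nonneg _)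
    have hs2 := hsum.mul_left mumin⁻¹
    have hs1 := Summable.of_nonneg_of_le (fun t => Finset.sum_nonneg fun i _ =>
      Finset.sum_nonneg fun j _ => sq_nonneg _) hterm hs2
    have h1 := hs1.tsum_le_tsum hterm hs2
    rw [tsum_mul_left] at h1
    have h2 := h1.trans (mul_le_mul_of_nonneg_left hle (inv_nonneg.2 hm0.le))
    refine (mul_le_mul_of_nonneg_left h2 (by positivity)).trans (le_of_eq ?_)
    field_simp
  · rw [LQcostW]
    simp_rw [wterm hP hmu]
    exact hle
end

section
/- Let P be a normal consensus matrix with minimum and maximum nonzero entries p_min, p_max and maximum in-degree δ_in (excluding self-loops) in its directed graph. Then (1/(p_max² f(δ_in))) R̄(G(P)) ≤ J(P) ≤ (1/p_min²) R̄(G(P)), where f(δ) = 4δ² + 2δ − 2. -/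
open Matrix

/-- The averaging matrix. -/
noncomputable def avgJ (n : ℕ) : Matrix (Fin n) (Fin n) ℝ := Matrix.of fun _ _ => (1 / (n : ℝ))

lemma lap_mulVec_apply {n : ℕ} (C : Matrix (Fin n) (Fin n) ℝ) (x : Fin n → ℝ) (i : Fin n) :
    (lap C *ᵥ x) i = ∑ j, C i j * (x i - x j) := by
  simp only [lap, Matrix.sub_mulVec, Pi.sub_apply, Matrix.mulVec_diagonal]
  simp only [Matrix.mulVec, dotProduct, mul_sub, Finset.sum_sub_distrib, Finset.sum_mul]

lemma lap_quad {n : ℕ} (C : Matrix (Fin n) (Fin n) ℝ) (hC : ∀ i j, C i j = C j i)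
    (x : Fin n → ℝ) :
    x ⬝ᵥ (lap C *ᵥ x) = (1 / 2) * ∑ i, ∑ j, C i j * (x i - x j) ^ 2 := by
  have h1 : x ⬝ᵥ (lap C *ᵥ x) = ∑ i, ∑ j, C i j * (x i - x j) * x i := by
    simp only [dotProduct, lap_mulVec_apply, Finset.mul_sum]
    refine Finset.sum_congr rfl fun i _ => Finset.sum_congr rfl fun j _ => by ring
  have h2 : x ⬝ᵥ (lap C *ᵥ x) = ∑ i, ∑ j, C i j * (x j - x i) * x j := by
    rw [h1, Finset.sum_comm]
    refine Finset.sum_congr rfl fun i _ => Finset.sum_congr rfl fun j _ => by rw [hC j i]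
  have h3 : ∑ i, ∑ j, C i j * (x i - x j) ^ 2 = x ⬝ᵥ (lap C *ᵥ x) + x ⬝ᵥ (lap C *ᵥ x) := by
    nth_rewrite 1 [h1]
    rw [h2, ← Finset.sum_add_distrib]
    refine Finset.sum_congr rfl fun i _ => ?_
    rw [← Finset.sum_add_distrib]
    refine Finset.sum_congr rfl fun j _ => by ring
  rw [h3]; ring

lemma avgJ_mulVec {n : ℕ} (x : Fin n → ℝ) (i : Fin n) :
    (avgJ n *ᵥ x) i = (1 / (n : ℝ)) * ∑ j, x j := by
  simp [avgJ, Matrix.mulVec, dotProduct, Finset.mul_sum]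

lemma lap_symm {n : ℕ} (C : Matrix (Fin n) (Fin n) ℝ) (hC : ∀ i j, C i j = C j i) :
    (lap C)ᵀ = lap C := by
  have : Cᵀ = C := by ext i j; exact hC j i
  simp [lap, this]

lemma avgJ_symm (n : ℕ) : (avgJ n)ᵀ = avgJ n := by ext i j; simp [avgJ]

lemma lap_mul_avgJ {n : ℕ} (C : Matrix (Fin n) (Fin n) ℝ) : lap C * avgJ n = 0 := by
  ext i j
  have := lap_mulVec_apply C (fun _ => 1 / (n : ℝ)) i
  simp only [sub_self, mul_zero, Finset.sum_const_zero] at this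
  simpa [Matrix.mul_apply, avgJ, Matrix.mulVec, dotProduct] using this

lemma avgJ_mul_lap {n : ℕ} (C : Matrix (Fin n) (Fin n) ℝ) (hC : ∀ i j, C i j = C j i) :
    avgJ n * lap C = 0 := by
  have := congrArg Matrix.transpose (lap_mul_avgJ C)
  rwa [Matrix.transpose_mul, lap_symm C hC, avgJ_symm, Matrix.transpose_zero] at this

lemma avgJ_mul_avgJ {n : ℕ} (hn : 0 < n) : avgJ n * avgJ n = avgJ n := by
  have : (n : ℝ) ≠ 0 := by positivity
  ext i j
  simp [avgJ, Matrix.mul_apply]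
  field_simp

lemma avgJ_trace {n : ℕ} (hn : 0 < n) : (avgJ n).trace = 1 := by
  have : (n : ℝ) ≠ 0 := by positivity
  simp [avgJ, Matrix.trace]
  field_simp

lemma posDef_lap {n : ℕ} (hn : 0 < n) (C : Matrix (Fin n) (Fin n) ℝ)
    (hC : ∀ i j, C i j = C j i) (h0 : ∀ i j, 0 ≤ C i j)
    (hconn : ∀ x : Fin n → ℝ, (∀ i j, C i j ≠ 0 → x i = x j) → ∀ i j, x i = x j)
    (c : ℝ) (hc : 0 < c) :
    (c • lap C + avgJ n).PosDef := by
  have hn' : (0 : ℝ) < n := by positivity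
  refine Matrix.PosDef.of_dotProduct_mulVec_pos ?_ ?_
  · rw [Matrix.IsHermitian, Matrix.conjTranspose_eq_transpose_of_trivial, Matrix.transpose_add,
      Matrix.transpose_smul, lap_symm C hC, avgJ_symm]
  · intro x hx
    have e : star x ⬝ᵥ ((c • lap C + avgJ n) *ᵥ x)
        = c * ((1 / 2) * ∑ i, ∑ j, C i j * (x i - x j) ^ 2) + (1 / (n : ℝ)) * (∑ j, x j) ^ 2 := by
      rw [star_trivial, Matrix.add_mulVec, dotProduct_add, Matrix.smul_mulVec, dotProduct_smul,
        lap_quad C hC, smul_eq_mul]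
      congr 1
      simp only [dotProduct, avgJ_mulVec, ← Finset.sum_mul]
      ring
    rw [e]
    have p0 : ∀ i j, 0 ≤ C i j * (x i - x j) ^ 2 := fun i j => mul_nonneg (h0 i j) (sq_nonneg _)
    have p1 : 0 ≤ ∑ i, ∑ j, C i j * (x i - x j) ^ 2 :=
      Finset.sum_nonneg fun i _ => Finset.sum_nonneg fun j _ => p0 i j
    have p2 : 0 ≤ (1 / (n : ℝ)) * (∑ j, x j) ^ 2 := by positivity
    by_contra hcon
    have q1 : ∑ i, ∑ j, C i j * (x i - x j) ^ 2 = 0 := by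
      by_contra hne
      have : 0 < ∑ i, ∑ j, C i j * (x i - x j) ^ 2 := lt_of_le_of_ne p1 (Ne.symm hne)
      exact hcon (by positivity)
    rw [q1] at hcon
    have q2 : ∑ j, x j = 0 := by
      by_contra hne
      exact hcon (by positivity)
    have hcst := hconn x (fun i j hij => by
      have a := (Finset.sum_eq_zero_iff_of_nonneg
        (fun i _ => Finset.sum_nonneg fun j _ => p0 i j)).1 q1 i (Finset.mem_univ _)
      have b := (Finset.sum_eq_zero_iff_of_nonneg (fun j _ => p0 i j)).1 a j (Finset.mem_univ _)
      rcases mul_eq_zero.1 b with h | h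
      · exact absurd h hij
      · exact sub_eq_zero.1 (pow_eq_zero_iff (two_ne_zero) |>.1 h))
    apply hx
    funext i
    have : ∑ j, x j = n * x i := by
      rw [Finset.sum_congr rfl (fun j _ => hcst j i)]; simp
    rw [this] at q2
    exact (mul_eq_zero.1 q2).resolve_left hn'.ne'

lemma trace_inv_le {n : ℕ} (M N : Matrix (Fin n) (Fin n) ℝ) (hM : M.PosDef) (hN : N.PosDef)
    (h : ∀ x : Fin n → ℝ, x ⬝ᵥ (M *ᵥ x) ≤ x ⬝ᵥ (N *ᵥ x)) : N⁻¹.trace ≤ M⁻¹.trace := by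
  have hMu : M * M⁻¹ = 1 := Matrix.mul_nonsing_inv M ((Matrix.isUnit_iff_isUnit_det _).1 hM.isUnit)
  have hNu : N * N⁻¹ = 1 := Matrix.mul_nonsing_inv N ((Matrix.isUnit_iff_isUnit_det _).1 hN.isUnit)
  have hMt : Mᵀ = M := by
    rw [← Matrix.conjTranspose_eq_transpose_of_trivial]; exact hM.isHermitian
  refine Finset.sum_le_sum fun i _ => ?_
  simp only [Matrix.diag_apply]
  set e : Fin n → ℝ := Pi.single i 1 with he
  set w := M⁻¹ *ᵥ e with hw
  set y := N⁻¹ *ᵥ e with hy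
  have hMw : M *ᵥ w = e := by rw [hw, Matrix.mulVec_mulVec, hMu, Matrix.one_mulVec]
  have hNy : N *ᵥ y = e := by rw [hy, Matrix.mulVec_mulVec, hNu, Matrix.one_mulVec]
  have e1 : M⁻¹ i i = w i := by simp [hw, he]
  have e2 : N⁻¹ i i = y i := by simp [hy, he]
  have hpos := hM.posSemidef.dotProduct_mulVec_nonneg (w - y)
  have hle := h y
  have d1 : w ⬝ᵥ e = w i := by simp [he]
  have d2 : y ⬝ᵥ e = y i := by simp [he]
  have d3 : w ⬝ᵥ (M *ᵥ y) = y i := by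
    rw [Matrix.dotProduct_mulVec, ← Matrix.mulVec_transpose, hMt, hMw, dotProduct_comm, d2]
  rw [star_trivial, Matrix.mulVec_sub, dotProduct_sub, sub_dotProduct, sub_dotProduct, hMw, d1,
    d2, d3] at hpos
  rw [hNy, d2] at hle
  rw [e1, e2]
  linarith

lemma trace_scale {n : ℕ} (hn : 0 < n) (C : Matrix (Fin n) (Fin n) ℝ)
    (hC : ∀ i j, C i j = C j i) (hM : (lap C + avgJ n).PosDef) (c : ℝ) (hc : 0 < c) :
    (c • lap C + avgJ n)⁻¹.trace = (1 / c) * ((lap C + avgJ n)⁻¹.trace - 1) + 1 := by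
  set K := (lap C + avgJ n)⁻¹ with hK
  have hMu : (lap C + avgJ n) * K = 1 :=
    Matrix.mul_nonsing_inv _ ((Matrix.isUnit_iff_isUnit_det _).1 hM.isUnit)
  have hJK : avgJ n * K = avgJ n := by
    have := congrArg (fun X => avgJ n * X) hMu
    simp only [← Matrix.mul_assoc, Matrix.mul_add, avgJ_mul_lap C hC, avgJ_mul_avgJ hn, zero_add,
      Matrix.mul_one] at this
    exact this
  have hLK : lap C * K = 1 - avgJ n := by
    rw [Matrix.add_mul, hJK] at hMu
    exact eq_sub_of_add_eq hMu
  have hinv : (c • lap C + avgJ n)⁻¹ = (1 / c) • (K - avgJ n) + avgJ n := by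
    apply Matrix.inv_eq_right_inv
    rw [Matrix.add_mul, Matrix.mul_add, Matrix.mul_add]
    simp only [Matrix.smul_mul, Matrix.mul_smul, Matrix.mul_sub, hJK, hLK, lap_mul_avgJ,
      avgJ_mul_avgJ hn]
    simp [hc.ne']
  rw [hinv, Matrix.trace_add, Matrix.trace_smul, Matrix.trace_sub, avgJ_trace hn, smul_eq_mul]

lemma trace_cmp {n : ℕ} (hn : 0 < n) (C D : Matrix (Fin n) (Fin n) ℝ)
    (hC : ∀ i j, C i j = C j i) (hC0 : ∀ i j, 0 ≤ C i j)
    (hCc : ∀ x : Fin n → ℝ, (∀ i j, C i j ≠ 0 → x i = x j) → ∀ i j, x i = x j)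
    (hD : ∀ i j, D i j = D j i) (hD0 : ∀ i j, 0 ≤ D i j)
    (hDc : ∀ x : Fin n → ℝ, (∀ i j, D i j ≠ 0 → x i = x j) → ∀ i j, x i = x j)
    (c : ℝ) (hc : 0 < c)
    (h : ∀ x : Fin n → ℝ, ∑ i, ∑ j, C i j * (x i - x j) ^ 2 ≤
      c * ∑ i, ∑ j, D i j * (x i - x j) ^ 2) :
    (1 / c) * ((lap D + avgJ n)⁻¹.trace - 1) ≤ (lap C + avgJ n)⁻¹.trace - 1 := by
  have pC := posDef_lap hn C hC hC0 hCc 1 one_pos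
  have pD := posDef_lap hn D hD hD0 hDc 1 one_pos
  have pDc := posDef_lap hn D hD hD0 hDc c hc
  rw [one_smul] at pC pD
  have := trace_inv_le _ _ pC pDc (fun x => by
    rw [Matrix.add_mulVec, Matrix.add_mulVec, dotProduct_add, dotProduct_add, Matrix.smul_mulVec,
      dotProduct_smul, lap_quad C hC, lap_quad D hD, smul_eq_mul]
    linarith [h x])
  rw [trace_scale hn D hD pD c hc] at this
  linarith

lemma avgRes_eq {n : ℕ} (hn : 0 < n) (C : Matrix (Fin n) (Fin n) ℝ)
    (hC : ∀ i j, C i j = C j i) (hM : (lap C + avgJ n).PosDef) :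
    avgRes C = (1 / (n : ℝ)) * ((lap C + avgJ n)⁻¹.trace - 1) := by
  have hn' : (n : ℝ) ≠ 0 := by positivity
  set K := (lap C + avgJ n)⁻¹ with hK
  have hMu : (lap C + avgJ n) * K = 1 :=
    Matrix.mul_nonsing_inv _ ((Matrix.isUnit_iff_isUnit_det _).1 hM.isUnit)
  have hJK : avgJ n * K = avgJ n := by
    have := congrArg (fun X => avgJ n * X) hMu
    simp only [← Matrix.mul_assoc, Matrix.mul_add, avgJ_mul_lap C hC, avgJ_mul_avgJ hn, zero_add,
      Matrix.mul_one] at this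
    exact this
  have hLK : lap C * K = 1 - avgJ n := by
    rw [Matrix.add_mul, hJK] at hMu
    exact eq_sub_of_add_eq hMu
  have hcol : ∀ j, ∑ i, K i j = 1 := by
    intro j
    have := congrFun (congrFun hJK ⟨0, hn⟩) j
    simp only [avgJ, Matrix.mul_apply, Matrix.of_apply, ← Finset.mul_sum] at this
    field_simp at this
    exact this
  have hres : ∀ a b, effRes C a b = K a a - K a b - K b a + K b b := by
    intro a b
    set e : Fin n → ℝ := Pi.single a 1 - Pi.single b 1 with he
    have hv : lap C *ᵥ (K *ᵥ e) = e := by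
      rw [Matrix.mulVec_mulVec, hLK, Matrix.sub_mulVec, Matrix.one_mulVec]
      have : avgJ n *ᵥ e = 0 := by
        funext i
        rw [avgJ_mulVec]
        simp [he]
      rw [this, sub_zero]
    have hex : ∃ v : Fin n → ℝ, lap C *ᵥ v = Pi.single a 1 - Pi.single b 1 := ⟨_, hv⟩
    unfold effRes
    rw [dif_pos hex]
    have hw := hex.choose_spec
    set w := hex.choose
    have h1 : w ⬝ᵥ e = w a - w b := by simp [he, dotProduct_sub]
    have h2 : (K *ᵥ e) ⬝ᵥ e = K a a - K a b - K b a + K b b := by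
      simp [he, dotProduct_sub, Matrix.mulVec_sub]; ring
    rw [← h1, ← h2]
    nth_rewrite 1 [← hv]
    rw [Matrix.dotProduct_mulVec, ← Matrix.mulVec_transpose, lap_symm C hC, hw, dotProduct_comm]
  unfold avgRes
  have hs : ∑ u, ∑ v, effRes C u v = 2 * n * (K.trace - 1) := by
    simp only [hres, Finset.sum_add_distrib, Finset.sum_sub_distrib]
    have t1 : ∑ u, ∑ v : Fin n, K u u = n * K.trace := by
      simp [Matrix.trace, Finset.mul_sum]
    have t2 : ∑ u : Fin n, ∑ v : Fin n, K v v = n * K.trace := by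
      simp [Matrix.trace]
    have t3 : ∑ u, ∑ v, K u v = n := (Finset.sum_comm).trans (by simp [hcol])
    have t4 : ∑ u, ∑ v, K v u = n := by simp [hcol]
    rw [t1, t2, t3, t4]; ring
  rw [hs]
  field_simp

lemma hasSum_trace_pow {n : ℕ} (E : Matrix (Fin n) (Fin n) ℝ) (hE : E.PosSemidef)
    (h1 : (1 - E).PosDef) : HasSum (fun t : ℕ => (E ^ t).trace) ((1 - E)⁻¹.trace) := by
  have hH := hE.isHermitian
  set e := hH.eigenvalues with he
  set φ := Unitary.conjStarAlgAut ℝ (Matrix (Fin n) (Fin n) ℝ) hH.eigenvectorUnitary with hφ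
  have hsp : E = φ (Matrix.diagonal e) := by
    have := hH.spectral_theorem
    exact this
  have htr : ∀ X, (φ X).trace = X.trace := by
    intro X
    rw [hφ, Unitary.conjStarAlgAut_apply, Matrix.trace_mul_comm, ← Matrix.mul_assoc]
    simp
  have he0 : ∀ i, 0 ≤ e i := fun i => hE.eigenvalues_nonneg i
  have he1 : ∀ i, e i < 1 := by
    intro i
    have hv := hH.mulVec_eigenvectorBasis i
    set v : Fin n → ℝ := ⇑(hH.eigenvectorBasis i) with hvdef
    have hv0 : v ≠ 0 := by
      intro h0
      have := (hH.eigenvectorBasis).orthonormal.ne_zero i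
      apply this
      ext j
      exact congrFun h0 j
    have hp := h1.dotProduct_mulVec_pos hv0
    rw [Matrix.sub_mulVec, Matrix.one_mulVec, hv, dotProduct_sub, dotProduct_smul, star_trivial,
      smul_eq_mul] at hp
    have hvv : 0 ≤ v ⬝ᵥ v := Finset.sum_nonneg fun j _ => mul_self_nonneg _
    change 0 < v ⬝ᵥ v - e i * (v ⬝ᵥ v) at hp
    by_contra hcon
    push Not at hcon
    nlinarith
  have hpow : ∀ t : ℕ, (E ^ t).trace = ∑ i, e i ^ t := by
    intro t
    rw [hsp, ← map_pow, htr, Matrix.diagonal_pow, Matrix.trace_diagonal]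
    rfl
  have hinv : (1 - E)⁻¹.trace = ∑ i, (1 - e i)⁻¹ := by
    have : (1 - E)⁻¹ = φ (Matrix.diagonal fun i => (1 - e i)⁻¹) := by
      apply Matrix.inv_eq_right_inv
      nth_rewrite 1 [hsp]
      rw [← map_one φ, ← map_sub, ← map_mul]
      congr 1
      rw [← Matrix.diagonal_one, Matrix.diagonal_sub, Matrix.diagonal_mul_diagonal]
      congr 1
      funext i
      have := he1 i
      exact mul_inv_cancel₀ (by linarith)
    rw [this, htr, Matrix.trace_diagonal]
  simp only [hpow, hinv]
  exact hasSum_sum fun i _ => hasSum_geometric_of_lt_one (he0 i) (he1 i)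

lemma frob_eq {n : ℕ} (X : Matrix (Fin n) (Fin n) ℝ) :
    ∑ i, ∑ j, (X i j) ^ 2 = (X * Xᵀ).trace := by
  simp [Matrix.trace, Matrix.mul_apply, sq]

lemma hasSum_frob {n : ℕ} (hn : 0 < n) (P : Matrix (Fin n) (Fin n) ℝ)
    (hnormal : P * Pᵀ = Pᵀ * P) (h1 : P * avgJ n = avgJ n) (h2 : avgJ n * P = avgJ n)
    (hpd : (1 - P * Pᵀ + avgJ n).PosDef) :
    HasSum (fun t : ℕ => ∑ i, ∑ j, ((P ^ t - avgJ n) i j) ^ 2)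
      ((1 - P * Pᵀ + avgJ n)⁻¹.trace - 1) := by
  set F := P - avgJ n with hF
  have hJJ := avgJ_mul_avgJ hn
  have h1t : avgJ n * Pᵀ = avgJ n := by
    have := congrArg Matrix.transpose h1
    rwa [Matrix.transpose_mul, avgJ_symm] at this
  have h2t : Pᵀ * avgJ n = avgJ n := by
    have := congrArg Matrix.transpose h2
    rwa [Matrix.transpose_mul, avgJ_symm] at this
  have hFt : Fᵀ = Pᵀ - avgJ n := by rw [hF, Matrix.transpose_sub, avgJ_symm]
  have hE : F * Fᵀ = P * Pᵀ - avgJ n := by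
    rw [hFt, hF]
    simp [Matrix.sub_mul, Matrix.mul_sub, h1, h1t, hJJ]
  have hE' : Fᵀ * F = P * Pᵀ - avgJ n := by
    rw [hFt, hF, hnormal]
    simp [Matrix.sub_mul, Matrix.mul_sub, h2, h2t, hJJ]
  have hcomm : Commute F Fᵀ := by rw [Commute, SemiconjBy, hE, hE']
  have hJp : ∀ t : ℕ, P ^ t * avgJ n = avgJ n := by
    intro t
    induction t with
    | zero => simp
    | succ k ih => rw [pow_succ, Matrix.mul_assoc, h1, ih]
  have hFp : ∀ t : ℕ, F ^ (t + 1) = P ^ (t + 1) - avgJ n := by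
    intro t
    induction t with
    | zero => simp [hF]
    | succ k ih =>
      rw [pow_succ, ih, hF]
      rw [Matrix.sub_mul, Matrix.mul_sub, Matrix.mul_sub, h2, hJJ, hJp, ← pow_succ]
      simp
  have hpsd : (F * Fᵀ).PosSemidef := by
    have := Matrix.posSemidef_self_mul_conjTranspose F
    rwa [Matrix.conjTranspose_eq_transpose_of_trivial] at this
  have heq : 1 - P * Pᵀ + avgJ n = 1 - F * Fᵀ := by rw [hE]; abel
  rw [heq] at hpd ⊢
  have hs := (hasSum_trace_pow _ hpsd hpd).sub (hasSum_ite_eq (0 : ℕ) (1 : ℝ))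
  suffices hfun : ∀ t : ℕ, ∑ i, ∑ j, ((P ^ t - avgJ n) i j) ^ 2
      = ((F * Fᵀ) ^ t).trace - if t = 0 then 1 else 0 by
    rw [funext hfun]; exact hs
  intro t
  rw [frob_eq]
  cases t with
  | zero =>
    simp only [pow_zero, if_true]
    rw [Matrix.transpose_sub, avgJ_symm, Matrix.transpose_one]
    simp [Matrix.sub_mul, Matrix.mul_sub, hJJ, avgJ_trace hn]
  | succ k =>
    rw [← hFp, Matrix.transpose_pow, ← hcomm.mul_pow]
    simp

lemma dot_PPt {n : ℕ} (P : Matrix (Fin n) (Fin n) ℝ) (x : Fin n → ℝ) :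
    x ⬝ᵥ ((P * Pᵀ) *ᵥ x) = (Pᵀ *ᵥ x) ⬝ᵥ (Pᵀ *ᵥ x) := by
  rw [← Matrix.mulVec_mulVec, Matrix.dotProduct_mulVec, ← Matrix.mulVec_transpose]

lemma doubly {n : ℕ} (P : Matrix (Fin n) (Fin n) ℝ) (hnormal : P * Pᵀ = Pᵀ * P)
    (hrow : ∀ i, (∑ j, P i j) = 1) : ∀ j, (∑ i, P i j) = 1 := by
  set o : Fin n → ℝ := fun _ => 1 with ho
  have h1 : P *ᵥ o = o := by
    funext i
    simp [Matrix.mulVec, dotProduct, ho, hrow]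
  have hz : (Pᵀ *ᵥ o - o) ⬝ᵥ (Pᵀ *ᵥ o - o) = 0 := by
    have a : (Pᵀ *ᵥ o) ⬝ᵥ (Pᵀ *ᵥ o) = o ⬝ᵥ o := by
      rw [← dot_PPt, hnormal, ← Matrix.mulVec_mulVec, Matrix.dotProduct_mulVec,
        ← Matrix.mulVec_transpose, Matrix.transpose_transpose, h1]
    have b : o ⬝ᵥ (Pᵀ *ᵥ o) = o ⬝ᵥ o := by
      rw [Matrix.dotProduct_mulVec, ← Matrix.mulVec_transpose, Matrix.transpose_transpose, h1]
    rw [dotProduct_sub, sub_dotProduct, sub_dotProduct, a, b, dotProduct_comm (Pᵀ *ᵥ o) o, b]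
    ring
  have := dotProduct_self_eq_zero.1 hz
  intro j
  have := congrFun (sub_eq_zero.1 this) j
  simpa [Matrix.mulVec, dotProduct, ho] using this

lemma conn_of_irred {n : ℕ} (P : Matrix (Fin n) (Fin n) ℝ)
    (hirr : ∀ i j, ∃ k : ℕ, 0 < (P ^ k) i j)
    (x : Fin n → ℝ) (hx : ∀ i j, P i j ≠ 0 → x i = x j) : ∀ i j, x i = x j := by
  have key : ∀ k : ℕ, ∀ i j, (P ^ k) i j ≠ 0 → x i = x j := by
    intro k
    induction k with
    | zero =>
      intro i j h
      by_contra hne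
      apply h
      rw [pow_zero, Matrix.one_apply_ne]
      rintro rfl
      exact hne rfl
    | succ k ih =>
      intro i j h
      rw [pow_succ, Matrix.mul_apply] at h
      obtain ⟨l, -, hl⟩ := Finset.exists_ne_zero_of_sum_ne_zero h
      exact (ih i l (left_ne_zero_of_mul hl)).trans (hx l j (right_ne_zero_of_mul hl))
  intro i j
  obtain ⟨k, hk⟩ := hirr i j
  exact key k i j (ne_of_gt hk)

/-- Star comparison. -/
lemma star_bound {n : ℕ} (S : Finset (Fin n)) (x : Fin n → ℝ) (c : ℝ) :
    ∑ i ∈ S, ∑ j ∈ S, (x i - x j) ^ 2 ≤ 2 * S.card * ∑ i ∈ S, (x i - c) ^ 2 := by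
  have h : ∑ i ∈ S, ∑ j ∈ S, (x i - x j) ^ 2
      = 2 * S.card * ∑ i ∈ S, (x i - c) ^ 2 - 2 * (∑ i ∈ S, (x i - c)) ^ 2 := by
    have e : ∀ i j, (x i - x j) ^ 2
        = (x i - c) ^ 2 + (x j - c) ^ 2 - 2 * ((x i - c) * (x j - c)) := fun i j => by ring
    simp only [e, Finset.sum_add_distrib, Finset.sum_sub_distrib, ← Finset.mul_sum,
      Finset.sum_const, nsmul_eq_mul, ← Finset.sum_mul]
    ring
  rw [h]
  nlinarith [sq_nonneg (∑ i ∈ S, (x i - c))]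

lemma upper_form {n : ℕ} (P : Matrix (Fin n) (Fin n) ℝ) (h0 : ∀ i j, 0 ≤ P i j)
    (hdiag : ∀ i, 0 < P i i) (pmax : ℝ) (din : ℕ) (hpmax : ∀ i j, P i j ≤ pmax)
    (hdin : ∀ j, inDeg P j ≤ din) (x : Fin n → ℝ) :
    ∑ i, ∑ j, (P * Pᵀ) i j * (x i - x j) ^ 2 ≤
      (pmax ^ 2 * (2 * (din + 1))) * ∑ i, ∑ j, adjMat P i j * (x i - x j) ^ 2 := by
  classical
  let S : Fin n → Finset (Fin n) := fun k => Finset.univ.filter fun i => P i k ≠ 0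
  have hcard : ∀ k, (S k).card ≤ din + 1 := by
    intro k
    have : S k ⊆ insert k (Finset.univ.filter fun i => i ≠ k ∧ P i k ≠ 0) := by
      intro i hi
      simp only [S, Finset.mem_filter, Finset.mem_univ, true_and, Finset.mem_insert] at hi ⊢
      tauto
    have h2 := (Finset.card_le_card this).trans (Finset.card_insert_le _ _)
    have h3 := hdin k
    unfold inDeg at h3
    have h4 : (Finset.univ.filter fun i => i ≠ k ∧ P i k ≠ 0).card ≤ din := by
      convert h3
    omega
  have step1 : ∑ i, ∑ j, (P * Pᵀ) i j * (x i - x j) ^ 2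
      = ∑ k, ∑ i, ∑ j, P i k * P j k * (x i - x j) ^ 2 := by
    simp only [Matrix.mul_apply, Matrix.transpose_apply, Finset.sum_mul]
    rw [Finset.sum_congr rfl fun i _ => Finset.sum_comm]
    exact Finset.sum_comm
  have step2 : ∑ i, ∑ j, adjMat P i j * (x i - x j) ^ 2
      = ∑ k, ∑ i, adjMat P i k * (x i - x k) ^ 2 := Finset.sum_comm
  rw [step1, step2, Finset.mul_sum]
  refine Finset.sum_le_sum fun k _ => ?_
  have pm : 0 ≤ pmax := (h0 k k).trans (hpmax k k)
  have a1 : ∑ i, ∑ j, P i k * P j k * (x i - x j) ^ 2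
      ≤ pmax ^ 2 * ∑ i ∈ S k, ∑ j ∈ S k, (x i - x j) ^ 2 := by
    simp only [S, Finset.sum_filter, Finset.mul_sum]
    refine Finset.sum_le_sum fun i _ => ?_
    by_cases hi : P i k = 0
    · simp [hi]
    · simp only [ne_eq, hi, not_false_eq_true, if_true, Finset.mul_sum]
      refine Finset.sum_le_sum fun j _ => ?_
      by_cases hj : P j k = 0
      · simp [hj]
      · simp only [hj, not_false_eq_true, if_true]
        refine mul_le_mul_of_nonneg_right ?_ (sq_nonneg _)
        rw [sq]
        exact mul_le_mul (hpmax i k) (hpmax j k) (h0 j k) pm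
  have a2 := star_bound (S k) x (x k)
  have a3 : ∑ i ∈ S k, (x i - x k) ^ 2 ≤ ∑ i, adjMat P i k * (x i - x k) ^ 2 := by
    simp only [S, Finset.sum_filter]
    refine Finset.sum_le_sum fun i _ => ?_
    by_cases hik : i = k
    · subst hik; simp
    · by_cases hi : P i k = 0
      · simp only [hi, ne_eq, not_true_eq_false, if_false]
        refine mul_nonneg ?_ (sq_nonneg _)
        simp only [adjMat, Matrix.of_apply]
        split_ifs <;> norm_num
      · simp [adjMat, hi, hik]
  have a4 : (0 : ℝ) ≤ ∑ i ∈ S k, (x i - x k) ^ 2 := Finset.sum_nonneg fun i _ => sq_nonneg _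
  have a5 : ((S k).card : ℝ) ≤ din + 1 := by exact_mod_cast hcard k
  calc _ ≤ pmax ^ 2 * ∑ i ∈ S k, ∑ j ∈ S k, (x i - x j) ^ 2 := a1
    _ ≤ pmax ^ 2 * (2 * (S k).card * ∑ i ∈ S k, (x i - x k) ^ 2) := by gcongr
    _ ≤ pmax ^ 2 * (2 * (din + 1) * ∑ i, adjMat P i k * (x i - x k) ^ 2) := by gcongr
    _ = _ := by ring

lemma lower_form {n : ℕ} (P : Matrix (Fin n) (Fin n) ℝ) (h0 : ∀ i j, 0 ≤ P i j)
    (hdiag : ∀ i, 0 < P i i) (pmin : ℝ) (hp : 0 < pmin) (hpmin : ∀ i j, P i j ≠ 0 → pmin ≤ P i j)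
    (i j : Fin n) : pmin ^ 2 * adjMat P i j ≤ (P * Pᵀ) i j := by
  have hnn : ∀ k, 0 ≤ P i k * P j k := fun k => mul_nonneg (h0 i k) (h0 j k)
  simp only [Matrix.mul_apply, Matrix.transpose_apply, adjMat, Matrix.of_apply]
  split_ifs with h
  · obtain ⟨-, h | h⟩ := h
    · calc pmin ^ 2 * 1 = pmin * pmin := by ring
        _ ≤ P i j * P j j := mul_le_mul (hpmin _ _ h) (hpmin _ _ (hdiag j).ne') hp.le (h0 _ _)
        _ ≤ _ := Finset.single_le_sum (f := fun k => P i k * P j k) (fun k _ => hnn k)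
          (Finset.mem_univ j)
    · calc pmin ^ 2 * 1 = pmin * pmin := by ring
        _ ≤ P i i * P j i := mul_le_mul (hpmin _ _ (hdiag i).ne') (hpmin _ _ h) hp.le (h0 _ _)
        _ ≤ _ := Finset.single_le_sum (f := fun k => P i k * P j k) (fun k _ => hnn k)
          (Finset.mem_univ i)
  · rw [mul_zero]
    exact Finset.sum_nonneg fun k _ => hnn k

/-- For a normal consensus matrix `P`,
`(1/(pmax² f(δ_in))) R̄(G(P)) ≤ J(P) ≤ (1/pmin²) R̄(G(P))` with `f(δ) = 4δ² + 2δ − 2`. -/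
theorem stmt18 {n : ℕ} (P : Matrix (Fin n) (Fin n) ℝ) (mu : Fin n → ℝ)
    (hP : IsConsensus P) (hmu : IsInvMeasure P mu)
    (hnormal : P * Pᵀ = Pᵀ * P)
    (pmin pmax : ℝ) (din : ℕ)
    (hpmin : (∀ i j, P i j ≠ 0 → pmin ≤ P i j) ∧ ∃ i j, P i j ≠ 0 ∧ P i j = pmin)
    (hpmax : (∀ i j, P i j ≤ pmax) ∧ ∃ i j, P i j ≠ 0 ∧ P i j = pmax)
    (hdin : (∀ j, inDeg P j ≤ din) ∧ ∃ j, inDeg P j = din) :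
    (1 / (pmax ^ 2 * (4 * (din : ℝ) ^ 2 + 2 * (din : ℝ) - 2))) * avgRes (adjMat P) ≤
        LQcost P mu ∧
      LQcost P mu ≤ (1 / pmin ^ 2) * avgRes (adjMat P) := by
  classical
  obtain ⟨h0, hrow, hirr, hdiag⟩ := hP
  obtain ⟨hmu0, hmu1, hmuP⟩ := hmu
  obtain ⟨hpmin, a0, b0, hab, hab'⟩ := hpmin
  obtain ⟨hpmax, -⟩ := hpmax
  obtain ⟨hdin, -⟩ := hdin
  have hn : 0 < n := a0.pos
  have hn' : (0 : ℝ) < n := by exact_mod_cast hn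
  have hp : 0 < pmin := hab' ▸ lt_of_le_of_ne (h0 a0 b0) (Ne.symm hab)
  have hpM : 0 < pmax := (hdiag a0).trans_le (hpmax a0 a0)
  have hcol := doubly P hnormal hrow
  set A := adjMat P with hA
  set Q := P * Pᵀ with hQ
  have hAs : ∀ i j, A i j = A j i := by
    intro i j
    simp only [hA, adjMat, Matrix.of_apply, ne_eq, eq_comm (a := i), or_comm (a := ¬ P i j = 0)]
  have hA0 : ∀ i j, 0 ≤ A i j := by
    intro i j
    simp only [hA, adjMat, Matrix.of_apply]
    split_ifs <;> norm_num
  have hAc : ∀ x : Fin n → ℝ, (∀ i j, A i j ≠ 0 → x i = x j) → ∀ i j, x i = x j := by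
    intro x hx
    refine conn_of_irred P hirr x fun i j hij => ?_
    by_cases h : i = j
    · rw [h]
    · exact hx i j (by simp [hA, adjMat, h, hij])
  have hlow := lower_form P h0 hdiag pmin hp hpmin
  have hQs : ∀ i j, Q i j = Q j i := by
    intro i j
    simp only [hQ, Matrix.mul_apply, Matrix.transpose_apply, mul_comm]
  have hQ0 : ∀ i j, 0 ≤ Q i j := fun i j =>
    (mul_nonneg (sq_nonneg pmin) (hA0 i j)).trans (hlow i j)
  have hQc : ∀ x : Fin n → ℝ, (∀ i j, Q i j ≠ 0 → x i = x j) → ∀ i j, x i = x j := by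
    intro x hx
    refine hAc x fun i j hij => hx i j ?_
    have h1 : 0 < A i j := lt_of_le_of_ne (hA0 i j) (Ne.symm hij)
    have h2 : 0 < pmin ^ 2 * A i j := by positivity
    exact (h2.trans_le (hlow i j)).ne'
  have hQrow : ∀ i, ∑ j, Q i j = 1 := by
    intro i
    simp only [hQ, Matrix.mul_apply, Matrix.transpose_apply]
    rw [Finset.sum_comm]
    simp only [← Finset.mul_sum, hcol, mul_one, hrow]
  have hlapQ : lap Q = 1 - Q := by
    simp only [lap, hQrow, Matrix.diagonal_one]
  have pA := posDef_lap hn A hAs hA0 hAc 1 one_pos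
  have pQ := posDef_lap hn Q hQs hQ0 hQc 1 one_pos
  rw [one_smul] at pA pQ
  have hmuc : ∀ i j, mu i = mu j := by
    have hPm : Pᵀ *ᵥ mu = mu := by
      funext j
      rw [← hmuP j]
      simp [Matrix.mulVec, dotProduct, mul_comm]
    have hz : mu ⬝ᵥ (lap Q *ᵥ mu) = 0 := by
      rw [hlapQ, Matrix.sub_mulVec, dotProduct_sub, Matrix.one_mulVec, dot_PPt, hPm, sub_self]
    rw [lap_quad Q hQs] at hz
    have p0 : ∀ i j, 0 ≤ Q i j * (mu i - mu j) ^ 2 := fun i j =>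
      mul_nonneg (hQ0 i j) (sq_nonneg _)
    have q1 : ∑ i, ∑ j, Q i j * (mu i - mu j) ^ 2 = 0 := by linarith
    refine hQc mu fun i j hij => ?_
    have a := (Finset.sum_eq_zero_iff_of_nonneg
      (fun i _ => Finset.sum_nonneg fun j _ => p0 i j)).1 q1 i (Finset.mem_univ _)
    have b := (Finset.sum_eq_zero_iff_of_nonneg (fun j _ => p0 i j)).1 a j (Finset.mem_univ _)
    rcases mul_eq_zero.1 b with h | h
    · exact absurd h hij
    · exact sub_eq_zero.1 (pow_eq_zero_iff (two_ne_zero) |>.1 h)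
  have hmuv : ∀ i, mu i = 1 / (n : ℝ) := by
    intro i
    have : ∑ j, mu j = n * mu i := by
      rw [Finset.sum_congr rfl (fun j _ => hmuc j i)]; simp
    rw [this] at hmu1
    field_simp
    linarith
  have hvec : Matrix.vecMulVec (fun _ => (1 : ℝ)) mu = avgJ n := by
    ext i j
    simp [Matrix.vecMulVec_apply, avgJ, hmuv]
  have hPJ : P * avgJ n = avgJ n := by
    ext i j
    simp only [Matrix.mul_apply, avgJ, Matrix.of_apply, ← Finset.sum_mul, hrow, one_mul]
  have hJP : avgJ n * P = avgJ n := by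
    ext i j
    simp only [Matrix.mul_apply, avgJ, Matrix.of_apply, ← Finset.mul_sum, hcol, mul_one]
  have hJ : LQcost P mu = (1 / (n : ℝ)) * ((lap Q + avgJ n)⁻¹.trace - 1) := by
    have hs := hasSum_frob hn P hnormal hPJ hJP (by rw [← hQ, ← hlapQ]; exact pQ)
    rw [← hQ, ← hlapQ] at hs
    unfold LQcost
    rw [hvec, hs.tsum_eq]
  have hR := avgRes_eq hn A hAs pA
  rw [hJ, hR]
  have hup := trace_cmp hn A Q hAs hA0 hAc hQs hQ0 hQc (1 / pmin ^ 2) (by positivity) (fun x => by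
    rw [Finset.mul_sum]
    refine Finset.sum_le_sum fun i _ => ?_
    rw [Finset.mul_sum]
    refine Finset.sum_le_sum fun j _ => ?_
    rw [← mul_assoc]
    refine mul_le_mul_of_nonneg_right ?_ (sq_nonneg _)
    rw [one_div, inv_mul_eq_div, le_div_iff₀ (by positivity), mul_comm]
    exact hlow i j)
  set TA := (lap A + avgJ n)⁻¹.trace - 1
  set TQ := (lap Q + avgJ n)⁻¹.trace - 1
  rw [one_div_one_div] at hup
  have hsum0 : ∀ x : Fin n → ℝ, 0 ≤ ∑ i, ∑ j, A i j * (x i - x j) ^ 2 := fun x =>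
    Finset.sum_nonneg fun i _ => Finset.sum_nonneg fun j _ => mul_nonneg (hA0 i j) (sq_nonneg _)
  have hTQ : 0 ≤ (1 / (n : ℝ)) * TQ := by
    rw [← hJ]
    unfold LQcost
    refine mul_nonneg (by positivity) (tsum_nonneg fun t => ?_)
    exact Finset.sum_nonneg fun i _ => Finset.sum_nonneg fun j _ => sq_nonneg _
  constructor
  · rcases Nat.eq_zero_or_pos din with hd | hd
    · have hTQ' : 0 ≤ TQ := by
        by_contra hcon
        push Not at hcon
        have : (1 / (n : ℝ)) * TQ < 0 := mul_neg_of_pos_of_neg (by positivity) hcon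
        linarith
      have hTA : 0 ≤ TA := (mul_nonneg (sq_nonneg pmin) hTQ').trans hup
      refine le_trans (mul_nonpos_of_nonpos_of_nonneg ?_ (by positivity)) hTQ
      rw [hd]
      apply div_nonpos_of_nonneg_of_nonpos zero_le_one
      push_cast
      nlinarith [sq_nonneg pmax]
    · have hd1 : (1 : ℝ) ≤ din := by exact_mod_cast hd
      have hf : 2 * ((din : ℝ) + 1) ≤ 4 * (din : ℝ) ^ 2 + 2 * (din : ℝ) - 2 := by nlinarith
      have hf0 : 0 < 4 * (din : ℝ) ^ 2 + 2 * (din : ℝ) - 2 := by nlinarith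
      have := trace_cmp hn Q A hQs hQ0 hQc hAs hA0 hAc
        (pmax ^ 2 * (4 * (din : ℝ) ^ 2 + 2 * (din : ℝ) - 2)) (by positivity) (fun x =>
          (upper_form P h0 hdiag pmax din hpmax hdin x).trans
            (mul_le_mul_of_nonneg_right (mul_le_mul_of_nonneg_left hf (sq_nonneg _)) (hsum0 x)))
      rw [mul_left_comm]
      exact mul_le_mul_of_nonneg_left this (by positivity)
  · rw [mul_left_comm]
    refine mul_le_mul_of_nonneg_left ?_ (by positivity)
    rw [one_div, inv_mul_eq_div, le_div_iff₀ (by positivity), mul_comm]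
    exact hup
end
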